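/- If U is Haar-random on U(d) with d ≥ 2, then E[U_{ij} U_{lm} Ū_{i₁j₁} Ū_{l₁m₁}] = (δ_{i,i₁}δ_{l,l₁}δ_{j,j₁}δ_{m,m₁} + δ_{i,l₁}δ_{l,i₁}δ_{j,m₁}δ_{m,j₁})/(d²−1) − (δ_{i,i₁}δ_{l,l₁}δ_{j,m₁}δ_{m,j₁} + δ_{i,l₁}δ_{l,i₁}δ_{j,j₁}δ_{m,m₁})/(d(d²−1)). -/

import Mathlib

open MeasureTheory Matrix

/-!
By left invariance of the Haar measure, the twirl `T = E[(U ⊗ U) A (U ⊗ U)ᴴ]` of any matrix `A`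
commutes with all `V ⊗ V`. Such matrices are combinations of `1` and the flip `F`: commuting with
diagonal unitaries kills every entry whose row and column index pairs differ as multisets,
commuting with permutation matrices leaves only three distinct values for the other entries, and
commuting with one unitary that mixes two basis vectors relates these three values linearly.
The two coefficients of `T` follow from `tr T = tr A` and `tr (F T) = tr (F A)`. When `A` is a
matrix unit, the entries of `T` are the second moments.
-/

section Twirl

variable {G A : Type*} [Group G] [MeasurableSpace G] [CStarAlgebra A]

/-- The twirl (average over the group) of `a` by a unitary representation `ρ`. For the Haar measure
it maps into the commutant of `ρ`. As a Bochner integral it is `0` unless the conjugates of `a` are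
integrable, which holds for continuous `ρ` and finite `μ`. -/
noncomputable def twirl (μ : Measure G) (ρ : G →* unitary A) (a : A) : A :=
  ∫ g, (ρ g : A) * a * star (ρ g : A) ∂μ

variable [TopologicalSpace G] [OpensMeasurableSpace G] [SecondCountableTopologyEither G A]
  {μ : Measure G} {ρ : G →* unitary A}

theorem integrable_unitary_conj [IsFiniteMeasure μ] (hρ : Continuous ρ) (a : A) :
    Integrable (fun g ↦ (ρ g : A) * a * star (ρ g : A)) μ := by
  have cont : Continuous fun g ↦ (ρ g : A) := continuous_subtype_val.comp hρ
  refine .of_bound ((cont.mul continuous_const).mul cont.star).aestronglyMeasurable ‖a‖ ?_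
  exact .of_forall fun g ↦ by
    rw [← Unitary.coe_star, CStarRing.norm_mul_coe_unitary, CStarRing.norm_coe_unitary_mul]

theorem commute_twirl [MeasurableMul G] [IsFiniteMeasure μ] [μ.IsMulLeftInvariant]
    (hρ : Continuous ρ) (a : A) (h : G) : Commute (ρ h : A) (twirl μ ρ a) := by
  have integrable := integrable_unitary_conj (μ := μ) hρ a
  calc (ρ h : A) * twirl μ ρ a
      = ∫ g, (ρ h : A) * ((ρ g : A) * a * star (ρ g : A)) ∂μ :=
        (integral_const_mul_of_integrable integrable).symm
    _ = ∫ g, ((ρ (h * g) : A) * a * star (ρ (h * g) : A)) * (ρ h : A) ∂μ := by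
        simp [mul_assoc]
    _ = (∫ g, (ρ (h * g) : A) * a * star (ρ (h * g) : A) ∂μ) * (ρ h : A) :=
        integral_mul_const_of_integrable (integrable.comp_mul_left h)
    _ = twirl μ ρ a * (ρ h : A) := by
        rw [integral_mul_left_eq_self (fun g ↦ (ρ g : A) * a * star (ρ g : A)), twirl]

theorem mul_twirl_of_commute [IsFiniteMeasure μ] (hρ : Continuous ρ) {b : A}
    (hb : ∀ g, Commute b (ρ g)) (a : A) : b * twirl μ ρ a = twirl μ ρ (b * a) := by
  rw [twirl, ← integral_const_mul_of_integrable (integrable_unitary_conj hρ a)]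
  simp only [twirl, ← mul_assoc, (hb _).eq]

theorem map_twirl_of_tracial [IsProbabilityMeasure μ] (hρ : Continuous ρ) (τ : A →L[ℂ] ℂ)
    (hτ : ∀ x y, τ (x * y) = τ (y * x)) (a : A) : τ (twirl μ ρ a) = τ a := by
  rw [twirl, ← τ.integral_comp_comm (integrable_unitary_conj hρ a)]
  simp [hτ _ (star _), ← mul_assoc]

end Twirl

section TensorSquare

open scoped Kronecker

variable {n R : Type*} [DecidableEq n]

variable (n R) in
/-- The flip operator `x ⊗ y ↦ y ⊗ x` on `Rⁿ ⊗ Rⁿ`, whose basis is indexed by `n × n`. -/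
def tensorFlip [Zero R] [One R] : Matrix (n × n) (n × n) R :=
  Equiv.Perm.permMatrix R (Equiv.prodComm n n)

theorem tensorFlip_apply [Zero R] [One R] (p q : n × n) :
    tensorFlip n R p q = if p.swap = q then 1 else 0 := by
  simp [tensorFlip, eq_comm]

variable [Fintype n]

theorem tensorFlip_mul_apply [NonAssocSemiring R] (M : Matrix (n × n) (n × n) R) (p q : n × n) :
    (tensorFlip n R * M) p q = M p.swap q := by
  simp [tensorFlip, PEquiv.toMatrix_toPEquiv_mul]

theorem tensorFlip_mul_self [NonAssocSemiring R] : tensorFlip n R * tensorFlip n R = 1 := by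
  ext p q
  simp [tensorFlip_mul_apply, tensorFlip_apply, one_apply]

theorem trace_tensorFlip [NonAssocSemiring R] : (tensorFlip n R).trace = Fintype.card n := by
  simp [trace, tensorFlip_apply, Fintype.sum_prod_type, Prod.ext_iff, ite_and, -Finset.sum_boole]

theorem commute_tensorFlip_kronecker [CommSemiring R] (V : Matrix n n R) :
    Commute (tensorFlip n R) (V ⊗ₖ V) := by
  ext p q
  rw [tensorFlip_mul_apply, tensorFlip, PEquiv.mul_toMatrix_toPEquiv]
  simp [mul_comm]

variable [CommRing R] [StarRing R]

/-- The representation `U ↦ U ⊗ U` of the unitary group, with `U ⊗ U` encoded as a Kronecker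
product. -/
def tensorSquare : unitaryGroup n R →* unitaryGroup (n × n) R where
  toFun U := ⟨(U : Matrix n n R) ⊗ₖ (U : Matrix n n R), kronecker_mem_unitary U.2 U.2⟩
  map_one' := Subtype.ext one_kronecker_one
  map_mul' _ _ := Subtype.ext (mul_kronecker_mul _ _ _ _)

@[simp]
theorem coe_tensorSquare (U : unitaryGroup n R) :
    (tensorSquare U : Matrix (n × n) (n × n) R) = (U : Matrix n n R) ⊗ₖ (U : Matrix n n R) :=
  rfl

theorem continuous_tensorSquare [TopologicalSpace R] [ContinuousMul R] :
    Continuous (tensorSquare : unitaryGroup n R →* unitaryGroup (n × n) R) := by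
  have entry (a b : n) : Continuous fun U : unitaryGroup n R ↦ (U : Matrix n n R) a b :=
    continuous_subtype_val.matrix_elem a b
  exact .subtype_mk (continuous_matrix fun (p q : n × n) ↦ (entry p.1 q.1).mul (entry p.2 q.2)) _

theorem diagonal_mem_unitaryGroup {u : n → R} (hu : ∀ k, u k ∈ unitary R) :
    diagonal u ∈ unitaryGroup n R := by
  rw [mem_unitaryGroup_iff, star_eq_conjTranspose, diagonal_conjTranspose, diagonal_mul_diagonal,
    ← diagonal_one]
  exact congrArg diagonal (funext fun k ↦ Unitary.mul_star_self_of_mem (hu k))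

theorem permMatrix_mem_unitaryGroup (σ : Equiv.Perm n) :
    σ.permMatrix R ∈ unitaryGroup n R := by
  rw [mem_unitaryGroup_iff, star_eq_conjTranspose, conjTranspose_permMatrix, ← permMatrix_mul]
  simp

end TensorSquare

theorem exists_perm_apply_eq_and_apply_eq {n : Type*} {x y i l : n} (hxy : x ≠ y) (hil : i ≠ l) :
    ∃ σ : Equiv.Perm n, σ x = i ∧ σ y = l :=
  MulAction.is_two_pretransitive_iff.mp (Equiv.Perm.isMultiplyPretransitive n 2) hxy hil

section Commutant

open scoped Kronecker

variable {n : Type*} [Fintype n] [DecidableEq n]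

theorem exists_mem_unitaryGroup_apply_ne_zero {i l : n} (hil : i ≠ l) :
    ∃ V ∈ unitaryGroup n ℂ, V i i ≠ 0 ∧ V i l ≠ 0 := by
  -- `a + b i S` with `a`, `b` real is unitary when `S` is a Hermitian involution and `a² + b² = 1`.
  refine ⟨(3 / 5 : ℂ) • 1 + (4 / 5 * Complex.I) • swap ℂ i l, ?_, ?_, ?_⟩
  · rw [mem_unitaryGroup_iff, star_eq_conjTranspose]
    simp only [conjTranspose_add, conjTranspose_smul, conjTranspose_one, conjTranspose_swap,
      add_mul, mul_add, smul_mul_smul_comm, mul_one, one_mul, swap_mul_self, star_div₀, star_ofNat,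
      star_mul', RCLike.star_def, Complex.conj_I, mul_neg, neg_smul]
    match_scalars
    · linear_combination -(16 / 25) * Complex.I_sq
    · ring
  · simp [swap, hil.symm]
  · simp [swap, hil]

/-- Membership in the commutant of the representation `V ↦ V ⊗ V` of the unitary group. -/
def CommutesWithTensorSquares (M : Matrix (n × n) (n × n) ℂ) : Prop :=
  ∀ V ∈ unitaryGroup n ℂ, Commute (V ⊗ₖ V) M

namespace CommutesWithTensorSquares

variable {M : Matrix (n × n) (n × n) ℂ}

theorem phase_mul_apply (hM : CommutesWithTensorSquares M) {u : n → ℂ}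
    (hu : ∀ k, u k ∈ unitary ℂ) (p q : n × n) :
    u p.1 * u p.2 * M p q = u q.1 * u q.2 * M p q := by
  have h := congrFun₂ (hM _ (diagonal_mem_unitaryGroup hu)) p q
  rwa [diagonal_kronecker_diagonal, diagonal_mul, mul_diagonal, mul_comm (M p q)] at h

theorem apply_eq_zero (hM : CommutesWithTensorSquares M) {i l i₁ l₁ : n} (h : s(i, l) ≠ s(i₁, l₁)) :
    M (i, l) (i₁, l₁) = 0 := by
  by_contra h0
  -- The phase has order 4, so its powers 0, 1, 2 detect the multiplicity of `k` in an index pair.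
  let u (k : n) : n → ℂ := Pi.mulSingle k Complex.I
  have phases_eq (k : n) : u k i * u k l = u k i₁ * u k l₁ :=
    mul_right_cancel₀ h0 (hM.phase_mul_apply (fun a ↦ by
      by_cases a = k <;> simp_all [u, Unitary.mem_iff]) (i, l) (i₁, l₁))
  have hi := phases_eq i
  have hl := phases_eq l
  have I_ne_one : Complex.I ≠ 1 := by simp [Complex.ext_iff]
  have neg_one_ne_one : (-1 : ℂ) ≠ 1 := by norm_num
  have neg_one_ne_I : (-1 : ℂ) ≠ Complex.I := by simp [Complex.ext_iff]
  simp only [u, Pi.mulSingle_apply] at hi hl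
  rw [Ne, Sym2.eq_iff] at h
  grind [Complex.I_mul_I]

theorem apply_perm (hM : CommutesWithTensorSquares M) (σ : Equiv.Perm n) (i l i₁ l₁ : n) :
    M (σ i, σ l) (σ i₁, σ l₁) = M (i, l) (i₁, l₁) := by
  have h := congrFun₂ (hM _ (permMatrix_mem_unitaryGroup σ)) (i, l) (σ i₁, σ l₁)
  have kronecker_eq : σ.permMatrix ℂ ⊗ₖ σ.permMatrix ℂ =
      Equiv.Perm.permMatrix ℂ (Equiv.prodCongr σ σ) := by
    ext p q
    simp [Prod.ext_iff, ← ite_and, and_comm]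
  rw [kronecker_eq, PEquiv.toMatrix_toPEquiv_mul, PEquiv.mul_toMatrix_toPEquiv] at h
  simpa using h

theorem apply_diag (hM : CommutesWithTensorSquares M) {i l : n} (hil : i ≠ l) :
    M (i, i) (i, i) = M (i, l) (i, l) + M (l, i) (i, l) := by
  obtain ⟨V, hV, hii, hil'⟩ := exists_mem_unitaryGroup_apply_ne_zero hil
  have left_entry : (V ⊗ₖ V * M) (i, i) (i, l) =
      V i i * V i l * (M (i, l) (i, l) + M (l, i) (i, l)) := by
    rw [mul_apply, Fintype.sum_eq_add (i, l) (l, i) (by simp [hil])]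
    · simp only [kronecker_apply]
      ring
    · rintro ⟨a, b⟩ hab
      rw [hM.apply_eq_zero (by simpa [Prod.ext_iff] using hab), mul_zero]
  have right_entry : (M * V ⊗ₖ V) (i, i) (i, l) = V i i * V i l * M (i, i) (i, i) := by
    rw [mul_apply, Fintype.sum_eq_single (i, i), kronecker_apply, mul_comm]
    rintro ⟨a, b⟩ hab
    rw [hM.apply_eq_zero (by grind [Sym2.eq_iff]), zero_mul]
  refine mul_left_cancel₀ (mul_ne_zero hii hil') ?_
  rw [← left_entry, ← right_entry, hM V hV]

theorem eq_smul_one_add_smul_tensorFlip (hM : CommutesWithTensorSquares M) {x y : n}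
    (hxy : x ≠ y) :
    M = M (x, y) (x, y) • 1 + M (x, y) (y, x) • tensorFlip n ℂ := by
  have direct {i l : n} (hil : i ≠ l) : M (i, l) (i, l) = M (x, y) (x, y) := by
    obtain ⟨σ, rfl, rfl⟩ := exists_perm_apply_eq_and_apply_eq hxy hil
    exact hM.apply_perm σ x y x y
  have crossed {i l : n} (hil : i ≠ l) : M (i, l) (l, i) = M (x, y) (y, x) := by
    obtain ⟨σ, rfl, rfl⟩ := exists_perm_apply_eq_and_apply_eq hxy hil
    exact hM.apply_perm σ x y y x
  have diag (i : n) : M (i, i) (i, i) = M (x, y) (x, y) + M (x, y) (y, x) := by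
    have : Nontrivial n := ⟨x, y, hxy⟩
    obtain ⟨l, hl⟩ := exists_ne i
    rw [hM.apply_diag hl.symm, direct hl.symm, crossed hl]
  ext ⟨i, l⟩ ⟨i₁, l₁⟩
  obtain h | h := ne_or_eq s(i, l) s(i₁, l₁)
  · have direct_ne : (i, l) ≠ (i₁, l₁) := by grind
    have crossed_ne : (l, i) ≠ (i₁, l₁) := by grind [Sym2.eq_swap]
    simp [hM.apply_eq_zero h, tensorFlip_apply, direct_ne, crossed_ne]
  · obtain rfl | hil := eq_or_ne i l
    · obtain ⟨rfl, rfl⟩ : i = i₁ ∧ i = l₁ := by grind [Sym2.eq_iff]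
      simp [diag, tensorFlip_apply]
    · obtain ⟨rfl, rfl⟩ | ⟨rfl, rfl⟩ := Sym2.eq_iff.mp h
      · simp [direct hil, tensorFlip_apply, hil.symm]
      · simp [crossed hil, tensorFlip_apply, hil]

theorem eq_trace_smul_one_add_trace_smul_tensorFlip [Nontrivial n]
    (hM : CommutesWithTensorSquares M) :
    M = ((Fintype.card n * M.trace - (tensorFlip n ℂ * M).trace) /
          (Fintype.card n * ((Fintype.card n : ℂ) ^ 2 - 1))) • 1 +
        ((Fintype.card n * (tensorFlip n ℂ * M).trace - M.trace) /
          (Fintype.card n * ((Fintype.card n : ℂ) ^ 2 - 1))) • tensorFlip n ℂ := by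
  obtain ⟨x, y, hxy⟩ := exists_pair_ne n
  have card_ne : (Fintype.card n : ℂ) ≠ 0 := Nat.cast_ne_zero.mpr Fintype.card_ne_zero
  have sq_sub_one_ne : (Fintype.card n : ℂ) ^ 2 - 1 ≠ 0 := by
    rw [sub_ne_zero]
    exact_mod_cast (Nat.one_lt_pow two_ne_zero Fintype.one_lt_card).ne'
  generalize hd : (Fintype.card n : ℂ) = d at *
  obtain ⟨a, b, rfl⟩ : ∃ a b : ℂ, M = a • 1 + b • tensorFlip n ℂ :=
    ⟨_, _, hM.eq_smul_one_add_smul_tensorFlip hxy⟩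
  have trace_eq : (a • 1 + b • tensorFlip n ℂ).trace = d ^ 2 * a + d * b := by
    simp [trace_tensorFlip, hd]; ring
  have trace_flip_eq :
      (tensorFlip n ℂ * (a • 1 + b • tensorFlip n ℂ)).trace = d * a + d ^ 2 * b := by
    simp [mul_add, tensorFlip_mul_self, trace_tensorFlip, hd]; ring
  rw [trace_eq, trace_flip_eq]
  congr 2 <;> field_simp <;> ring

end CommutesWithTensorSquares

end Commutant

section Haar

open scoped Kronecker Matrix.Norms.L2Operator

variable {n : Type*} [Fintype n] [DecidableEq n]
  [MeasurableSpace (unitaryGroup n ℂ)] [BorelSpace (unitaryGroup n ℂ)]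
  (μ : Measure (unitaryGroup n ℂ)) [IsProbabilityMeasure μ]

theorem trace_mul_twirl_tensorSquare {B : Matrix (n × n) (n × n) ℂ}
    (hB : CommutesWithTensorSquares B) (A : Matrix (n × n) (n × n) ℂ) :
    (B * twirl μ tensorSquare A).trace = (B * A).trace := by
  rw [mul_twirl_of_commute (A := Matrix (n × n) (n × n) ℂ)
    continuous_tensorSquare fun U ↦ (hB U U.2).symm]
  exact map_twirl_of_tracial (A := Matrix (n × n) (n × n) ℂ) continuous_tensorSquare
    (traceLinearMap (n × n) ℂ ℂ).toContinuousLinearMap trace_mul_comm (B * A)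

theorem twirl_tensorSquare_eq [Nontrivial n] [μ.IsMulLeftInvariant] (A : Matrix (n × n) (n × n) ℂ) :
    twirl μ tensorSquare A =
        ((Fintype.card n * A.trace - (tensorFlip n ℂ * A).trace) /
          (Fintype.card n * ((Fintype.card n : ℂ) ^ 2 - 1))) • 1 +
        ((Fintype.card n * (tensorFlip n ℂ * A).trace - A.trace) /
          (Fintype.card n * ((Fintype.card n : ℂ) ^ 2 - 1))) • tensorFlip n ℂ := by
  have commutes : CommutesWithTensorSquares (twirl μ tensorSquare A) :=
    fun V hV ↦ commute_twirl (A := Matrix (n × n) (n × n) ℂ) continuous_tensorSquare A ⟨V, hV⟩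
  have trace_eq : (twirl μ tensorSquare A).trace = A.trace := by
    simpa using trace_mul_twirl_tensorSquare μ (fun V _ ↦ Commute.one_right (V ⊗ₖ V)) A
  have trace_flip_eq := trace_mul_twirl_tensorSquare μ
    (fun V _ ↦ (commute_tensorFlip_kronecker V).symm) A
  rw [commutes.eq_trace_smul_one_add_trace_smul_tensorFlip, trace_eq, trace_flip_eq]

theorem twirl_tensorSquare_single_apply (i j l m i₁ j₁ l₁ m₁ : n) :
    twirl μ tensorSquare (single (j, m) (j₁, m₁) 1) (i, l) (i₁, l₁) =
      ∫ U, (U : Matrix n n ℂ) i j * (U : Matrix n n ℂ) l m *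
        star ((U : Matrix n n ℂ) i₁ j₁) * star ((U : Matrix n n ℂ) l₁ m₁) ∂μ := by
  let entry := (entryLinearMap ℂ ℂ (i, l) (i₁, l₁)).toContinuousLinearMap
  have integrable := integrable_unitary_conj (A := Matrix (n × n) (n × n) ℂ) (μ := μ)
    continuous_tensorSquare (single (j, m) (j₁, m₁) 1)
  refine (entry.integral_comp_comm integrable).symm.trans ?_
  refine integral_congr_ae (.of_forall fun U ↦ ?_)
  simp only [entry, LinearMap.coe_toContinuousLinearMap', entryLinearMap_apply]
  simp [mul_assoc, Matrix.mul_apply, single_apply, ite_and]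

end Haar

theorem haar_second_moment_general {n : Type*} [Fintype n] [DecidableEq n] [Nontrivial n]
    [MeasurableSpace (unitaryGroup n ℂ)] [BorelSpace (unitaryGroup n ℂ)]
    (μ : Measure (unitaryGroup n ℂ)) [μ.IsMulLeftInvariant] [IsProbabilityMeasure μ]
    (i j l m i₁ j₁ l₁ m₁ : n) :
    ∫ U, (U : Matrix n n ℂ) i j * (U : Matrix n n ℂ) l m *
        star ((U : Matrix n n ℂ) i₁ j₁) * star ((U : Matrix n n ℂ) l₁ m₁) ∂μ
      = ((if i = i₁ ∧ l = l₁ ∧ j = j₁ ∧ m = m₁ then 1 else 0) +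
          (if i = l₁ ∧ l = i₁ ∧ j = m₁ ∧ m = j₁ then 1 else 0)) /
            ((Fintype.card n : ℂ) ^ 2 - 1)
        - ((if i = i₁ ∧ l = l₁ ∧ j = m₁ ∧ m = j₁ then 1 else 0) +
            (if i = l₁ ∧ l = i₁ ∧ j = j₁ ∧ m = m₁ then 1 else 0)) /
              (Fintype.card n * ((Fintype.card n : ℂ) ^ 2 - 1)) := by
  have card_ne : (Fintype.card n : ℂ) ≠ 0 := Nat.cast_ne_zero.mpr Fintype.card_ne_zero
  have trace_single : (single (j, m) (j₁, m₁) (1 : ℂ)).trace =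
      if j = j₁ ∧ m = m₁ then 1 else 0 := by
    simp [trace, single_apply, ite_and, eq_comm]
  have trace_flip_single : (tensorFlip n ℂ * single (j, m) (j₁, m₁) (1 : ℂ)).trace =
      if j = m₁ ∧ m = j₁ then 1 else 0 := by
    simp [trace_mul_single, tensorFlip_apply, eq_comm]
  rw [← twirl_tensorSquare_single_apply, twirl_tensorSquare_eq, trace_single, trace_flip_single]
  have indicator_and (p q r s : Prop) [Decidable p] [Decidable q] [Decidable r] [Decidable s] :
      (if p ∧ q ∧ r ∧ s then 1 else 0 : ℂ) =
        (if p ∧ q then 1 else 0) * (if r ∧ s then 1 else 0) := by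
    simp only [ite_zero_mul_ite_zero, mul_one, and_assoc]
  simp only [Matrix.add_apply, Matrix.smul_apply, one_apply, tensorFlip_apply, smul_eq_mul,
    Prod.swap_prod_mk, Prod.mk.injEq, indicator_and, and_comm (a := l = i₁) (b := i = l₁)]
  field_simp
  ring

/-- second moment (Weingarten) formula for a Haar-random unitary on `U(d)`, `d ≥ 2`:
`E[U_{ij} U_{lm} conj(U_{i₁j₁}) conj(U_{l₁m₁})]
  = (δ_{i,i₁}δ_{l,l₁}δ_{j,j₁}δ_{m,m₁} + δ_{i,l₁}δ_{l,i₁}δ_{j,m₁}δ_{m,j₁})/(d²−1)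
  − (δ_{i,i₁}δ_{l,l₁}δ_{j,m₁}δ_{m,j₁} + δ_{i,l₁}δ_{l,i₁}δ_{j,j₁}δ_{m,m₁})/(d(d²−1))`. -/
theorem haar_second_moment (d : ℕ) (hd : 2 ≤ d)
    [MeasurableSpace (Matrix.unitaryGroup (Fin d) ℂ)]
    [BorelSpace (Matrix.unitaryGroup (Fin d) ℂ)]
    (μ : Measure (Matrix.unitaryGroup (Fin d) ℂ)) [μ.IsHaarMeasure] [IsProbabilityMeasure μ]
    (i j l m i₁ j₁ l₁ m₁ : Fin d) :
    ∫ U, (U : Matrix (Fin d) (Fin d) ℂ) i j * (U : Matrix (Fin d) (Fin d) ℂ) l m *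
        star ((U : Matrix (Fin d) (Fin d) ℂ) i₁ j₁) *
        star ((U : Matrix (Fin d) (Fin d) ℂ) l₁ m₁) ∂μ
      = ((if i = i₁ ∧ l = l₁ ∧ j = j₁ ∧ m = m₁ then 1 else 0) +
          (if i = l₁ ∧ l = i₁ ∧ j = m₁ ∧ m = j₁ then 1 else 0)) / ((d : ℂ) ^ 2 - 1)
        - ((if i = i₁ ∧ l = l₁ ∧ j = m₁ ∧ m = j₁ then 1 else 0) +
            (if i = l₁ ∧ l = i₁ ∧ j = j₁ ∧ m = m₁ then 1 else 0)) / (d * ((d : ℂ) ^ 2 - 1)) := by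
  have : Nontrivial (Fin d) := Fin.nontrivial_iff_two_le.mpr hd
  simpa only [Fintype.card_fin] using haar_second_moment_general μ i j l m i₁ j₁ l₁ m₁
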